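/- arXiv:math/0701391 — 2 statements merged into one kernel-verified Lean document; each statement's English description precedes it below -/
import Mathlib

section
/- Let d₁ ≥ 0 and 0 ≤ d₂ ≤ 2π, and set δ = d₁/√2 + sin(d₂/4)/√3. Let v = (x₁,y₁,α,x₂,y₂,β) be a parameter tuple such that every point of the configuration X(v) lies within distance 1 of E, within distance 1 of F, and has second coordinate in [−0.46, 0.46]. Then for any perturbed tuple v' = (x₁+δ₁, y₁+δ₂, α+θ₁, x₂+δ₃, y₂+δ₄, β+θ₂) with |δᵢ| ≤ d₁/2 for i = 1,...,4 and |θⱼ| ≤ d₂/2 for j = 1,2, one has μ(v') ≤ μ(v) + 3.4637·δ + π·δ². -/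
open Real MeasureTheory

noncomputable def pt (x y : ℝ) : EuclideanSpace ℝ (Fin 2) :=
  (WithLp.equiv 2 (Fin 2 → ℝ)).symm ![x, y]

noncomputable def sqVertex (x y a : ℝ) (k : Fin 4) : EuclideanSpace ℝ (Fin 2) :=
  pt (x + Real.sqrt 2 / 6 * Real.cos (a + ((k : ℕ) : ℝ) * (Real.pi / 2)))
     (y + Real.sqrt 2 / 6 * Real.sin (a + ((k : ℕ) : ℝ) * (Real.pi / 2)))

noncomputable def triVertex (x y b : ℝ) (k : Fin 3) : EuclideanSpace ℝ (Fin 2) :=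
  pt (x + Real.sqrt 3 / 6 * Real.cos (b + ((k : ℕ) : ℝ) * (2 * Real.pi / 3)))
     (y + Real.sqrt 3 / 6 * Real.sin (b + ((k : ℕ) : ℝ) * (2 * Real.pi / 3)))

noncomputable def config (x1 y1 a x2 y2 b : ℝ) : Set (EuclideanSpace ℝ (Fin 2)) :=
  {pt 0 0, pt 1 0} ∪ Set.range (sqVertex x1 y1 a) ∪ Set.range (triVertex x2 y2 b)

noncomputable def area (x1 y1 a x2 y2 b : ℝ) : ℝ :=
  (volume (convexHull ℝ (config x1 y1 a x2 y2 b))).toReal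

open scoped Pointwise

lemma slab_axis (K : Set ℂ) (hK : IsCompact K) (hc : Convex ℝ K) (w h : ℝ) (hh : 0 ≤ h)
    (hw : ∀ p ∈ K, ∀ q ∈ K, p.re - q.re ≤ w) :
    volume (K + segment ℝ (-((h : ℂ) * Complex.I)) ((h : ℂ) * Complex.I)) ≤
      volume K + ENNReal.ofReal (2 * h * w) := by
  rcases K.eq_empty_or_nonempty with rfl | hne
  · simp
  have hK2 : IsCompact (K + segment ℝ (-((h : ℂ) * Complex.I)) ((h : ℂ) * Complex.I)) :=
    hK.add (by rw [segment_eq_image]; exact isCompact_Icc.image (by fun_prop))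
  set K2 := K + segment ℝ (-((h : ℂ) * Complex.I)) ((h : ℂ) * Complex.I) with hK2d
  have e := Complex.volume_preserving_equiv_real_prod.symm
  have e1 := e.measure_preimage hK.measurableSet.nullMeasurableSet
  have e2 := e.measure_preimage hK2.measurableSet.nullMeasurableSet
  have m1 : MeasurableSet (Complex.measurableEquivRealProd.symm ⁻¹' K) :=
    Complex.measurableEquivRealProd.symm.measurable hK.measurableSet
  have m2 : MeasurableSet (Complex.measurableEquivRealProd.symm ⁻¹' K2) :=
    Complex.measurableEquivRealProd.symm.measurable hK2.measurableSet
  rw [← e1, ← e2, Measure.volume_eq_prod, Measure.prod_apply m1, Measure.prod_apply m2]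
  -- minimal real part
  obtain ⟨q0, hq0, hmin⟩ := hK.exists_isMinOn hne Complex.continuous_re.continuousOn
  have hI : volume (Set.Icc q0.re (q0.re + w)) = ENNReal.ofReal w := by
    rw [Real.volume_Icc]; congr 1; ring
  have key : ∀ x : ℝ, volume (Prod.mk x ⁻¹' (Complex.measurableEquivRealProd.symm ⁻¹' K2)) ≤
      volume (Prod.mk x ⁻¹' (Complex.measurableEquivRealProd.symm ⁻¹' K)) +
        (Set.Icc q0.re (q0.re + w)).indicator (fun _ => ENNReal.ofReal (2 * h)) x := by
    intro x
    set S := Prod.mk x ⁻¹' (Complex.measurableEquivRealProd.symm ⁻¹' K) with hS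
    have memS : ∀ y : ℝ, y ∈ S ↔ (⟨x, y⟩ : ℂ) ∈ K := by intro y; rfl
    have hsub : Prod.mk x ⁻¹' (Complex.measurableEquivRealProd.symm ⁻¹' K2) ⊆
        {z | ∃ y ∈ S, y - h ≤ z ∧ z ≤ y + h} := by
      intro z hz
      have hz' : (⟨x, z⟩ : ℂ) ∈ K2 := hz
      rw [hK2d, Set.mem_add] at hz'
      obtain ⟨p, hp, q, hq, hpq⟩ := hz'
      rw [segment_eq_image] at hq
      obtain ⟨t, ht, rfl⟩ := hq
      have h1 := congrArg Complex.re hpq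
      have h2 := congrArg Complex.im hpq
      simp at h1 h2
      refine ⟨p.im, ?_, ?_, ?_⟩
      · rw [memS, ← h1]; exact hp
      · nlinarith [ht.1, ht.2, mul_nonneg ht.1 hh]
      · nlinarith [ht.1, ht.2, mul_nonneg (sub_nonneg.2 ht.2) hh]
    rcases S.eq_empty_or_nonempty with hE | hN
    · have : Prod.mk x ⁻¹' (Complex.measurableEquivRealProd.symm ⁻¹' K2) = ∅ := by
        rw [Set.eq_empty_iff_forall_notMem]
        intro z hz
        obtain ⟨y, hy, _⟩ := hsub hz
        rw [hE] at hy; exact hy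
      rw [this]; simp
    · have hcont : Continuous (fun y : ℝ => (⟨x, y⟩ : ℂ)) := by
        have : (fun y : ℝ => (⟨x, y⟩ : ℂ)) = fun y : ℝ => (x : ℂ) + y * Complex.I := by
          funext y; apply Complex.ext <;> simp
        rw [this]; fun_prop
      have hScl : IsClosed S := hK.isClosed.preimage hcont
      have hSb : Bornology.IsBounded S := by
        obtain ⟨C, hC⟩ := hK.isBounded.exists_norm_le
        refine (Metric.isBounded_iff_subset_closedBall 0).2 ⟨C, fun y hy => ?_⟩
        have := hC _ ((memS y).1 hy)
        have h2 := Complex.abs_im_le_norm (⟨x, y⟩ : ℂ)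
        simp only [Metric.mem_closedBall, dist_zero_right, Real.norm_eq_abs]
        exact h2.trans this
      have hScp : IsCompact S := Metric.isCompact_of_isClosed_isBounded hScl hSb
      have hSc : Convex ℝ S := by
        intro y hy z hz a b ha hb hab
        rw [memS] at *
        have := hc hy hz ha hb hab
        convert this using 1
        apply Complex.ext
        · simp; rw [← add_mul, hab, one_mul]
        · simp
      obtain ⟨a, ha, hamin⟩ := hScp.exists_isMinOn hN continuousOn_id
      obtain ⟨b, hb, hbmax⟩ := hScp.exists_isMaxOn hN continuousOn_id
      have hab : Set.Icc a b ⊆ S := hSc.ordConnected.out ha hb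
      have hab' : a ≤ b := hamin hb
      have hx : x ∈ Set.Icc q0.re (q0.re + w) := by
        have h3 := (memS a).1 ha
        have h4 := hw _ h3 _ hq0
        have h5 : q0.re ≤ x := hmin h3
        simp at h4
        exact ⟨h5, by linarith⟩
      rw [Set.indicator_of_mem hx]
      calc volume (Prod.mk x ⁻¹' (Complex.measurableEquivRealProd.symm ⁻¹' K2))
          ≤ volume (Set.Icc (a - h) (b + h)) := by
            apply measure_mono
            intro z hz
            obtain ⟨y, hy, h6, h7⟩ := hsub hz
            have h8 : a ≤ y := hamin hy
            have h9 : y ≤ b := hbmax hy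
            exact ⟨by linarith, by linarith⟩
        _ = volume (Set.Icc a b) + ENNReal.ofReal (2 * h) := by
            rw [Real.volume_Icc, Real.volume_Icc, ← ENNReal.ofReal_add (by linarith) (by linarith)]
            congr 1; ring
        _ ≤ _ := by gcongr
  calc _ ≤ ∫⁻ x, (volume (Prod.mk x ⁻¹' (Complex.measurableEquivRealProd.symm ⁻¹' K)) +
        (Set.Icc q0.re (q0.re + w)).indicator (fun _ => ENNReal.ofReal (2 * h)) x) :=
        lintegral_mono key
    _ = _ := by
        rw [lintegral_add_right _ (measurable_const.indicator measurableSet_Icc),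
          lintegral_indicator_const measurableSet_Icc, hI,
          ← ENNReal.ofReal_mul (by linarith)]

lemma slab_rot (K : Set ℂ) (hK : IsCompact K) (hc : Convex ℝ K) (w h : ℝ) (hh : 0 ≤ h) (θ : ℝ)
    (hw : ∀ p ∈ K, ∀ q ∈ K, (p.re - q.re) * cos θ + (p.im - q.im) * sin θ ≤ w) :
    volume (K + segment ℝ (-((h : ℂ) * ⟨-sin θ, cos θ⟩)) ((h : ℂ) * ⟨-sin θ, cos θ⟩)) ≤
      volume K + ENNReal.ofReal (2 * h * w) := by
  let u : Circle := Circle.exp θ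
  have hu : (u : ℂ) = ⟨cos θ, sin θ⟩ := by
    simp only [u, Circle.coe_exp, Complex.exp_mul_I]
    apply Complex.ext <;> simp [← Complex.ofReal_cos, ← Complex.ofReal_sin]
  let R := rotation u
  let K0 := R.symm '' K
  have hmp := (R.symm).measurePreserving
  have hvol : ∀ S : Set ℂ, volume (R '' S) = volume S := by
    intro S
    have : R '' S = R.symm ⁻¹' S := by
      exact R.toEquiv.image_eq_preimage_symm S
    rw [this]
    exact R.symm.measurePreserving.measure_preimage_equiv (f := R.symm.toMeasurableEquiv) S
  have hRK0 : R '' K0 = K := by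
    simp [K0, Set.image_image]
  have hRapp : ∀ z, R z = u * z := fun z => rotation_apply u z
  have h0 := slab_axis K0 (hK.image R.symm.continuous)
    (hc.linear_image (R.symm.toLinearEquiv : ℂ →ₗ[ℝ] ℂ)) w h hh (by
      rintro _ ⟨p, hp, rfl⟩ _ ⟨q, hq, rfl⟩
      have := hw p hp q hq
      have hp' : u * (R.symm p) = p := by rw [← hRapp]; simp
      have hq' : u * (R.symm q) = q := by rw [← hRapp]; simp
      generalize R.symm p = p' at *
      generalize R.symm q = q' at *
      rw [hu] at hp' hq'
      subst hp' hq'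
      simp at this
      have e : p'.re - q'.re = (p'.re - q'.re) * (sin θ ^ 2 + cos θ ^ 2) := by
        rw [sin_sq_add_cos_sq, mul_one]
      linarith [e])
  rw [← hvol K0, hRK0, ← hvol (K0 + _)] at h0
  convert h0 using 2
  have himg : R '' (K0 + segment ℝ (-((h : ℂ) * Complex.I)) ((h : ℂ) * Complex.I)) =
      R '' K0 + R '' (segment ℝ (-((h : ℂ) * Complex.I)) ((h : ℂ) * Complex.I)) :=
    Set.image_add R
  rw [himg, hRK0]
  congr 1
  have := image_segment ℝ (R.toLinearEquiv.toLinearMap.toAffineMap) (-((h : ℂ) * Complex.I)) ((h : ℂ) * Complex.I)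
  have e : (⟨-sin θ, cos θ⟩ : ℂ) = u * Complex.I := by
    rw [hu]; apply Complex.ext <;> simp
  simp at this
  rw [this, hRapp, e]
  congr 1 <;> ring

/-- Partial zonotopes: sums of the segments `[-v k, v k]`, `k < n`. -/
def zono (v : ℕ → ℂ) : ℕ → Set ℂ
  | 0 => {0}
  | n + 1 => zono v n + segment ℝ (-(v n)) (v n)

lemma zono_compact (v : ℕ → ℂ) (n : ℕ) : IsCompact (zono v n) := by
  induction n with
  | zero => exact isCompact_singleton
  | succ n ih =>
    exact ih.add (by rw [segment_eq_image]; exact isCompact_Icc.image (by fun_prop))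

lemma zono_convex (v : ℕ → ℂ) (n : ℕ) : Convex ℝ (zono v n) := by
  induction n with
  | zero => exact convex_singleton 0
  | succ n ih => exact ih.add (convex_segment _ _)

lemma zono_exists_min (v : ℕ → ℂ) (f : ℂ →L[ℝ] ℝ) (n : ℕ) :
    ∃ b ∈ zono v n, f b = -∑ k ∈ Finset.range n, |f (v k)| := by
  induction n with
  | zero => exact ⟨0, rfl, by simp⟩
  | succ n ih =>
    obtain ⟨b, hb, hfb⟩ := ih
    rw [Finset.sum_range_succ]
    rcases abs_cases (f (v n)) with ⟨h, _⟩ | ⟨h, _⟩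
    · exact ⟨b + -(v n), Set.add_mem_add hb (left_mem_segment _ _ _), by
        rw [map_add, map_neg, hfb, h]; ring⟩
    · exact ⟨b + v n, Set.add_mem_add hb (right_mem_segment _ _ _), by
        rw [map_add, hfb, h]; ring⟩

noncomputable def dirv (h τ x : ℝ) (k : ℕ) : ℂ :=
  (h : ℂ) * ⟨-sin (τ + k * x), cos (τ + k * x)⟩

lemma zono_width (h τ x θ : ℝ) (hh : 0 ≤ h) (n : ℕ) :
    ∀ p ∈ zono (dirv h τ x) n, ∀ q ∈ zono (dirv h τ x) n,
      (p.re - q.re) * cos θ + (p.im - q.im) * sin θ ≤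
        ∑ j ∈ Finset.range n, 2 * h * |sin (θ - (τ + j * x))| := by
  induction n with
  | zero =>
    intro p hp q hq
    have hp : p = 0 := hp
    have hq : q = 0 := hq
    simp [hp, hq]
  | succ n ih =>
    rintro _ ⟨p, hp, p', hp', rfl⟩ _ ⟨q, hq, q', hq', rfl⟩
    have := ih p hp q hq
    rw [segment_eq_image] at hp' hq'
    obtain ⟨s, hs, rfl⟩ := hp'
    obtain ⟨t, ht, rfl⟩ := hq'
    rw [Finset.sum_range_succ]
    simp only [dirv, Complex.add_re, Complex.add_im, Complex.smul_re, Complex.smul_im,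
      Complex.neg_re, Complex.neg_im, Complex.mul_re, Complex.mul_im, Complex.ofReal_re,
      Complex.ofReal_im, smul_eq_mul]
    rw [sin_sub θ]
    set A := sin θ * cos (τ + n * x) - cos θ * sin (τ + n * x) with hA
    have h1 : (s - t) * A ≤ |A| := by
      calc (s - t) * A ≤ |(s - t) * A| := le_abs_self _
        _ = |s - t| * |A| := abs_mul _ _
        _ ≤ 1 * |A| := by
          gcongr
          rw [abs_le]; constructor <;> linarith [hs.1, hs.2, ht.1, ht.2]
        _ = |A| := one_mul _
    have h2 : 2 * h * ((s - t) * A) ≤ 2 * h * |A| := by gcongr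
    rw [hA] at h2 ⊢
    nlinarith [h2, this]

lemma vol_zono (K : Set ℂ) (hK : IsCompact K) (hc : Convex ℝ K) (W : ℝ → ℝ)
    (hW0 : ∀ θ, 0 ≤ W θ)
    (hw : ∀ θ, ∀ p ∈ K, ∀ q ∈ K, (p.re - q.re) * cos θ + (p.im - q.im) * sin θ ≤ W θ)
    (h τ x : ℝ) (hh : 0 ≤ h) (n : ℕ) :
    volume (K + zono (dirv h τ x) n) ≤ volume K + ENNReal.ofReal (∑ k ∈ Finset.range n,
      2 * h * (W (τ + k * x) + ∑ j ∈ Finset.range k, 2 * h * |sin ((k - j) * x)|)) := by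
  have pos : ∀ k : ℕ, 0 ≤ 2 * h * (W (τ + k * x) +
      ∑ j ∈ Finset.range k, 2 * h * |sin (((k : ℝ) - j) * x)|) := fun k => by
    have := hW0 (τ + k * x)
    positivity
  induction n with
  | zero => simp [zono]
  | succ n ih =>
    rw [Finset.sum_range_succ, ENNReal.ofReal_add (Finset.sum_nonneg fun k _ => pos k) (pos n),
      ← add_assoc]
    refine le_trans ?_ (add_le_add_left ih _)
    change volume (K + (zono (dirv h τ x) n + _)) ≤ _
    rw [← add_assoc]
    refine slab_rot _ (hK.add (zono_compact _ n)) (hc.add (zono_convex _ n)) _ h hh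
      (τ + n * x) ?_
    rintro _ ⟨p, hp, p', hp', rfl⟩ _ ⟨q, hq, q', hq', rfl⟩
    have h1 := hw (τ + n * x) p hp q hq
    have h2 := zono_width h τ x (τ + n * x) hh n p' hp' q' hq'
    have h3 : ∀ j : ℕ, τ + n * x - (τ + j * x) = ((n : ℝ) - j) * x := fun j => by ring
    simp only [h3] at h2
    simp only [Complex.add_re, Complex.add_im]
    linarith

/-- telescoping -/
lemma sum_sin_tele (ψ x : ℝ) (n : ℕ) :
    2 * sin (x / 2) * ∑ k ∈ Finset.range n, sin (ψ + k * x) =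
      cos (ψ - x / 2) - cos (ψ + n * x - x / 2) := by
  induction n with
  | zero => simp
  | succ n ih =>
    rw [Finset.sum_range_succ, mul_add, ih]
    have h1 : ψ + ((n + 1 : ℕ) : ℝ) * x - x / 2 = (ψ + n * x) + x / 2 := by push_cast; ring
    rw [h1, cos_add, cos_sub (ψ + n * x)]
    ring

lemma sum_abs_sin_ge (N : ℕ) (hN : 0 < N) (ψ : ℝ) :
    cos (π / N / 2) ≤ sin (π / N / 2) * ∑ k ∈ Finset.range N, |sin (ψ + k * (π / N))| := by
  set x := π / N with hx
  have hNx : (N : ℝ) * x = π := by rw [hx]; field_simp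
  have hx0 : 0 < x := by rw [hx]; positivity
  have hxpi : x ≤ π := by
    rw [hx]; exact div_le_self pi_pos.le (by exact_mod_cast hN)
  have per : Function.Periodic (fun ψ => ∑ k ∈ Finset.range N, |sin (ψ + k * x)|) x := by
    intro ψ
    simp only
    have h1 := Finset.sum_range_succ (fun k : ℕ => |sin (ψ + k * x)|) N
    have h2 := Finset.sum_range_succ' (fun k : ℕ => |sin (ψ + k * x)|) N
    rw [hNx, sin_add_pi, abs_neg] at h1
    simp only [Nat.cast_zero, zero_mul, add_zero] at h2
    have h3 : ∀ k : ℕ, ψ + x + k * x = ψ + ((k + 1 : ℕ) : ℝ) * x := fun k => by push_cast; ring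
    simp only [h3]
    linarith
  obtain ⟨y, hy, hxy⟩ := per.exists_mem_Ico₀ hx0 ψ
  rw [hxy]
  have h4 : ∑ k ∈ Finset.range N, |sin (y + k * x)| = ∑ k ∈ Finset.range N, sin (y + k * x) := by
    refine Finset.sum_congr rfl fun k hk => abs_of_nonneg ?_
    have hk' : (k : ℝ) + 1 ≤ N := by exact_mod_cast Finset.mem_range.1 hk
    apply sin_nonneg_of_nonneg_of_le_pi
    · have := hy.1; positivity
    · nlinarith [hy.2]
  have h5 := sum_sin_tele y x N
  rw [h4]
  rw [hNx, show y + π - x / 2 = (y - x / 2) + π by ring, cos_add_pi] at h5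
  have h6 : cos (x / 2) ≤ cos (y - x / 2) := by
    rw [← cos_abs (y - x / 2)]
    apply cos_le_cos_of_nonneg_of_le_pi (abs_nonneg _) (by linarith)
    rw [abs_le]; constructor <;> linarith [hy.1, hy.2]
  linarith

lemma sum_sum_sin (N : ℕ) (hN : 0 < N) :
    2 * sin (π / N / 2) * ∑ k ∈ Finset.range N, ∑ j ∈ Finset.range k,
      |sin (((k : ℝ) - j) * (π / N))| = N * cos (π / N / 2) := by
  set x := π / N with hx
  have hNx : (N : ℝ) * x = π := by rw [hx]; field_simp
  have hx0 : 0 < x := by rw [hx]; positivity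
  have h1 : ∀ k ∈ Finset.range N, 2 * sin (x / 2) * ∑ j ∈ Finset.range k,
      |sin (((k : ℝ) - j) * x)| = cos (x / 2) - sin (x / 2 + π / 2 + k * x) := by
    intro k hk
    have hk' : (k : ℝ) + 1 ≤ N := by exact_mod_cast Finset.mem_range.1 hk
    have h2 : ∑ j ∈ Finset.range k, |sin (((k : ℝ) - j) * x)| =
        ∑ j ∈ Finset.range k, sin (x + j * x) := by
      rw [← Finset.sum_range_reflect]
      refine Finset.sum_congr rfl fun j hj => ?_
      have hj' := Finset.mem_range.1 hj
      have h3 : ((k - 1 - j : ℕ) : ℝ) = k - 1 - j := by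
        rw [Nat.cast_sub (by omega), Nat.cast_sub (by omega)]; simp
      rw [h3, show ((k : ℝ) - (k - 1 - j)) * x = x + j * x by ring]
      apply abs_of_nonneg
      have hj2 : (j : ℝ) + 1 ≤ k := by exact_mod_cast hj'
      apply sin_nonneg_of_nonneg_of_le_pi
      · positivity
      · nlinarith
    rw [h2, sum_sin_tele, show x - x / 2 = x / 2 by ring,
      show x / 2 + π / 2 + k * x = (x + k * x - x / 2) + π / 2 by ring, sin_add_pi_div_two]
  have hs : sin (x / 2) ≠ 0 := by
    have hxpi : x ≤ π := by
      rw [hx]; exact div_le_self pi_pos.le (by exact_mod_cast hN)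
    exact (sin_pos_of_pos_of_lt_pi (by linarith) (by linarith [pi_pos])).ne'
  have h5 := sum_sin_tele (x / 2 + π / 2) x N
  rw [hNx, show x / 2 + π / 2 + π - x / 2 = π / 2 + π by ring,
    show x / 2 + π / 2 - x / 2 = π / 2 by ring, cos_add_pi, cos_pi_div_two] at h5
  have h6 : ∑ k ∈ Finset.range N, sin (x / 2 + π / 2 + k * x) = 0 := by
    have : 2 * sin (x / 2) ≠ 0 := mul_ne_zero two_ne_zero hs
    rw [neg_zero, sub_zero] at h5
    exact (mul_eq_zero.1 h5).resolve_left this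
  rw [Finset.mul_sum, Finset.sum_congr rfl h1, Finset.sum_sub_distrib, h6]
  simp

lemma ball_sub_zono (N : ℕ) (hN : 2 ≤ N) (δ τ : ℝ) (hδ : 0 ≤ δ) :
    Metric.closedBall (0 : ℂ) δ ⊆ zono (dirv (δ * tan (π / N / 2)) τ (π / N)) N := by
  set x := π / N with hx
  have hx0 : 0 < x := by rw [hx]; positivity
  have hxpi : x ≤ π / 2 := by
    rw [hx]
    have : (2 : ℝ) ≤ N := by exact_mod_cast hN
    gcongr
  intro z hz
  by_contra hcon
  obtain ⟨f, u, hfz, hfb⟩ := geometric_hahn_banach_point_closed (zono_convex _ _)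
    (zono_compact _ _).isClosed hcon
  obtain ⟨b, hb, hfb'⟩ := zono_exists_min (dirv (δ * tan (x / 2)) τ x) f N
  have h1 := hfb b hb
  have hlin : ∀ z : ℂ, f z = z.re * f 1 + z.im * f Complex.I := by
    intro z
    have : z = z.re • (1 : ℂ) + z.im • Complex.I := by apply Complex.ext <;> simp
    conv_lhs => rw [this]
    rw [map_add, map_smul, map_smul]; rfl
  -- polar form of the functional
  set g : ℂ := ⟨f 1, f Complex.I⟩ with hg
  have hg1 : f 1 = ‖g‖ * cos g.arg := by
    rw [Complex.norm_mul_cos_arg]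
  have hg2 : f Complex.I = ‖g‖ * sin g.arg := by
    rw [Complex.norm_mul_sin_arg]
  have ht : 0 ≤ tan (x / 2) := tan_nonneg_of_nonneg_of_le_pi_div_two (by linarith) (by linarith)
  have hterm : ∀ k : ℕ, |f (dirv (δ * tan (x / 2)) τ x k)| =
      δ * tan (x / 2) * ‖g‖ * |sin ((τ - g.arg) + k * x)| := by
    intro k
    rw [hlin, hg1, hg2, dirv]
    simp only [Complex.mul_re, Complex.mul_im, Complex.ofReal_re, Complex.ofReal_im]
    rw [show τ - g.arg + k * x = (τ + k * x) - g.arg by ring, sin_sub]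
    rw [← abs_of_nonneg (mul_nonneg (mul_nonneg hδ ht) (norm_nonneg g)), ← abs_mul, ← abs_neg]
    congr 1
    ring
  have hsum := sum_abs_sin_ge N (by omega) (τ - g.arg)
  rw [← hx] at hsum
  simp only [hterm] at hfb'
  rw [← Finset.mul_sum] at hfb'
  have hcos : 0 < cos (x / 2) := cos_pos_of_mem_Ioo ⟨by linarith, by linarith⟩
  have h2 : 1 ≤ tan (x / 2) * ∑ k ∈ Finset.range N, |sin ((τ - g.arg) + k * x)| := by
    rw [tan_eq_sin_div_cos, div_mul_eq_mul_div, le_div_iff₀ hcos]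
    linarith
  have h3 : -(‖g‖ * δ) ≤ f z := by
    have hz' : ‖z‖ ≤ δ := by simpa using hz
    have h4 : f z = (z * (starRingEnd ℂ) g).re := by
      rw [hlin]; simp [hg]
    rw [h4]
    have h5 := Complex.abs_re_le_norm (z * (starRingEnd ℂ) g)
    rw [norm_mul, RCLike.norm_conj] at h5
    have h6 := (abs_le.1 h5).1
    nlinarith [norm_nonneg g]
  have h7 := mul_le_mul_of_nonneg_left h2 (mul_nonneg (norm_nonneg g) hδ)
  nlinarith [h7]

lemma steiner_N (K : Set ℂ) (hK : IsCompact K) (hc : Convex ℝ K) (W : ℝ → ℝ)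
    (hWc : Continuous W) (hW0 : ∀ θ, 0 ≤ W θ)
    (hw : ∀ θ, ∀ p ∈ K, ∀ q ∈ K, (p.re - q.re) * cos θ + (p.im - q.im) * sin θ ≤ W θ)
    (δ : ℝ) (hδ : 0 ≤ δ) (N : ℕ) (hN : 2 ≤ N) :
    volume.real (K + Metric.closedBall 0 δ) ≤ volume.real K +
      ((π / N / 2)⁻¹ * tan (π / N / 2)) * (δ * (∫ θ in (0 : ℝ)..π, W θ) + π * δ ^ 2) := by
  have hds := sum_sum_sin N (by omega)
  have hball := fun τ => ball_sub_zono N hN δ τ hδ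
  have hN0 : (N : ℝ) ≠ 0 := by positivity
  set x := π / N with hx
  have hNx : (N : ℝ) * x = π := by rw [hx]; field_simp
  have hx0 : 0 < x := by rw [hx]; positivity
  have hxpi : x ≤ π / 2 := by
    rw [hx]
    have : (2 : ℝ) ≤ N := by exact_mod_cast hN
    gcongr
  have ht : 0 ≤ tan (x / 2) := tan_nonneg_of_nonneg_of_le_pi_div_two (by linarith) (by linarith)
  have hcos : 0 < cos (x / 2) := cos_pos_of_mem_Ioo ⟨by linarith, by linarith⟩
  set h := δ * tan (x / 2) with hh
  have hh0 : 0 ≤ h := mul_nonneg hδ ht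
  set D := ∑ k ∈ Finset.range N, ∑ j ∈ Finset.range k, |sin (((k : ℝ) - j) * x)| with hD
  have hhD : 2 * h * (2 * h * D) = 2 * h * (N * δ) := by
    have : 2 * h * D = N * δ := by
      rw [hh, tan_eq_sin_div_cos]
      field_simp
      linear_combination δ * hds
    rw [this]
  have hτ : ∀ τ : ℝ, volume.real (K + Metric.closedBall 0 δ) ≤ volume.real K +
      2 * h * ∑ k ∈ Finset.range N, W (τ + k * x) + 2 * h * (N * δ) := by
    intro τ
    have h1 := vol_zono K hK hc W hW0 hw h τ x hh0 N
    have hs : ∑ k ∈ Finset.range N,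
        2 * h * (W (τ + k * x) + ∑ j ∈ Finset.range k, 2 * h * |sin (((k : ℝ) - j) * x)|) =
        2 * h * ∑ k ∈ Finset.range N, W (τ + k * x) + 2 * h * (N * δ) := by
      rw [← hhD, hD, ← Finset.mul_sum, Finset.sum_add_distrib, mul_add]
      congr 2
      rw [Finset.mul_sum]
      refine Finset.sum_congr rfl fun k _ => ?_
      rw [Finset.mul_sum]
    rw [hs] at h1
    have h2 : volume (K + Metric.closedBall 0 δ) ≤ volume (K + zono (dirv h τ x) N) :=
      measure_mono (Set.add_subset_add_left (hball τ))
    have h3 := h2.trans h1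
    have hnn : 0 ≤ 2 * h * ∑ k ∈ Finset.range N, W (τ + k * x) + 2 * h * (N * δ) := by
      have : 0 ≤ ∑ k ∈ Finset.range N, W (τ + k * x) := Finset.sum_nonneg fun k _ => hW0 _
      positivity
    have hfin : volume K ≠ ⊤ := hK.measure_lt_top.ne
    have h4 := ENNReal.toReal_mono (by finiteness) h3
    rw [ENNReal.toReal_add hfin ENNReal.ofReal_ne_top, ENNReal.toReal_ofReal hnn] at h4
    rw [add_assoc]
    exact h4
  have hsumI : ∫ τ in (0 : ℝ)..x, ∑ k ∈ Finset.range N, W (τ + k * x) = ∫ θ in (0 : ℝ)..π, W θ := by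
    rw [intervalIntegral.integral_finsetSum
      (fun (k : ℕ) _ => (by fun_prop : Continuous fun τ => W (τ + k * x)).intervalIntegrable _ _)]
    have h5 := intervalIntegral.sum_integral_adjacent_intervals (f := W) (μ := volume)
      (a := fun k : ℕ => (k : ℝ) * x) (n := N) (fun k _ => hWc.intervalIntegrable _ _)
    simp only [Nat.cast_zero, zero_mul, hNx] at h5
    rw [← h5]
    refine Finset.sum_congr rfl fun k _ => ?_
    rw [intervalIntegral.integral_comp_add_right]
    congr 1
    · simp
    · push_cast; ring
  have hint := intervalIntegral.integral_mono_on (μ := volume) (a := 0) (b := x) hx0.le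
    (f := fun _ => volume.real (K + Metric.closedBall 0 δ))
    (g := fun τ => volume.real K +
      2 * h * ∑ k ∈ Finset.range N, W (τ + k * x) + 2 * h * (N * δ))
    (continuous_const.intervalIntegrable _ _)
    ((by fun_prop : Continuous _).intervalIntegrable _ _) (fun τ _ => hτ τ)
  have hcs : Continuous fun τ => ∑ k ∈ Finset.range N, W (τ + k * x) := by fun_prop
  rw [intervalIntegral.integral_const, intervalIntegral.integral_add
      ((by fun_prop : Continuous _).intervalIntegrable _ _)
      (continuous_const.intervalIntegrable _ _),
    intervalIntegral.integral_add (continuous_const.intervalIntegrable _ _)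
      ((by fun_prop : Continuous _).intervalIntegrable _ _),
    intervalIntegral.integral_const_mul, hsumI] at hint
  simp only [intervalIntegral.integral_const, sub_zero, smul_eq_mul] at hint
  rw [← mul_le_mul_iff_of_pos_left hx0]
  refine hint.trans (le_of_eq ?_)
  rw [hh, ← hNx]
  field_simp
  ring

lemma steiner (K : Set ℂ) (hK : IsCompact K) (hc : Convex ℝ K) (W : ℝ → ℝ)
    (hWc : Continuous W) (hW0 : ∀ θ, 0 ≤ W θ)
    (hw : ∀ θ, ∀ p ∈ K, ∀ q ∈ K, (p.re - q.re) * cos θ + (p.im - q.im) * sin θ ≤ W θ)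
    (δ : ℝ) (hδ : 0 ≤ δ) :
    volume.real (K + Metric.closedBall 0 δ) ≤ volume.real K +
      (δ * (∫ θ in (0 : ℝ)..π, W θ) + π * δ ^ 2) := by
  have h1 : Filter.Tendsto (fun t : ℝ => t⁻¹ * tan t) (nhdsWithin 0 {0}ᶜ) (nhds 1) := by
    have := (hasDerivAt_tan (x := 0) (by simp)).tendsto_slope_zero
    simpa using this
  have h2 : Filter.Tendsto (fun N : ℕ => π / N / 2) Filter.atTop (nhdsWithin 0 {0}ᶜ) := by
    rw [tendsto_nhdsWithin_iff]
    constructor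
    · have := (tendsto_const_div_atTop_nhds_zero_nat π).div_const 2
      simpa using this
    · filter_upwards [Filter.eventually_gt_atTop 0] with N hN
      have : 0 < π / N / 2 := by positivity
      exact this.ne'
  have h3 := ((h1.comp h2).mul_const (δ * (∫ θ in (0 : ℝ)..π, W θ) + π * δ ^ 2)).const_add
    (volume.real K)
  rw [one_mul] at h3
  refine ge_of_tendsto h3 ?_
  filter_upwards [Filter.eventually_ge_atTop 2] with N hN
  exact steiner_N K hK hc W hWc hW0 hw δ hδ N hN

/-- Width bound of the region, parametrised by the angle. -/
noncomputable def wid (θ : ℝ) : ℝ :=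
  if |sin θ| ≤ 2964 / 6445 then 2 - |cos θ|
  else (2 - 5723 / 6445 - 0.92 * (2964 / 6445)) / (5723 / 6445) * |cos θ| + 0.92 * |sin θ|

lemma wid_continuous : Continuous wid := by
  unfold wid
  refine Continuous.if_le (by fun_prop) (by fun_prop) (by fun_prop) continuous_const ?_
  intro θ hθ
  have h1 : |cos θ| = 5723 / 6445 := by
    have := sin_sq_add_cos_sq θ
    rw [← sq_abs (sin θ), ← sq_abs (cos θ), hθ] at this
    rw [← abs_of_nonneg (by norm_num : (0 : ℝ) ≤ 5723 / 6445), abs_abs (cos θ) |>.symm]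
    apply (sq_eq_sq_iff_abs_eq_abs _ _).1
    linarith
  rw [h1, hθ]; norm_num

lemma wid_nonneg (θ : ℝ) : 0 ≤ wid θ := by
  unfold wid
  split_ifs
  · linarith [abs_cos_le_one θ]
  · have : (0 : ℝ) ≤ (2 - 5723 / 6445 - 0.92 * (2964 / 6445)) / (5723 / 6445) := by norm_num
    positivity

lemma wid_bound1 (p q : ℂ) (hp0 : ‖p‖ ≤ 1) (hq1 : ‖q - 1‖ ≤ 1) (C S : ℝ)
    (hCS : C ^ 2 + S ^ 2 = 1) :
    (p.re - q.re) * C + (p.im - q.im) * S ≤ 2 - C := by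
  have e1 : p.re ^ 2 + p.im ^ 2 ≤ 1 := by
    have := Complex.sq_norm p
    rw [Complex.normSq_apply] at this
    nlinarith [norm_nonneg p]
  have e2 : (q.re - 1) ^ 2 + q.im ^ 2 ≤ 1 := by
    have := Complex.sq_norm (q - 1)
    rw [Complex.normSq_apply] at this
    simp at this
    nlinarith [norm_nonneg (q - 1)]
  nlinarith [sq_nonneg (p.re - C), sq_nonneg (p.im - S), sq_nonneg (q.re - 1 + C),
    sq_nonneg (q.im + S)]

lemma wid_bound (p q : ℂ) (hp0 : ‖p‖ ≤ 1) (hp1 : ‖p - 1‖ ≤ 1) (hp : |p.im| ≤ 0.46)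
    (hq0 : ‖q‖ ≤ 1) (hq1 : ‖q - 1‖ ≤ 1) (hq : |q.im| ≤ 0.46) (θ : ℝ) :
    (p.re - q.re) * cos θ + (p.im - q.im) * sin θ ≤ wid θ := by
  have hpq := wid_bound1 p q hp0 hq1
  have hqp := wid_bound1 q p hq0 hp1
  unfold wid
  split_ifs with hs
  · have h1 := hpq (cos θ) (sin θ) (by rw [add_comm]; exact sin_sq_add_cos_sq θ)
    have h2 := hqp (-cos θ) (-sin θ) (by rw [neg_sq, neg_sq, add_comm]; exact sin_sq_add_cos_sq θ)
    rcases abs_cases (cos θ) with ⟨h, _⟩ | ⟨h, _⟩ <;> rw [h] <;> linarith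
  · push Not at hs
    have h0 : |p.re - q.re| * (5723 / 6445) + |p.im - q.im| * (2964 / 6445) ≤ 2 - 5723 / 6445 := by
      have h1 := hpq (5723 / 6445) (2964 / 6445) (by norm_num)
      have h2 := hpq (5723 / 6445) (-(2964 / 6445)) (by norm_num)
      have h3 := hqp (5723 / 6445) (2964 / 6445) (by norm_num)
      have h4 := hqp (5723 / 6445) (-(2964 / 6445)) (by norm_num)
      rcases abs_cases (p.re - q.re) with ⟨h, _⟩ | ⟨h, _⟩ <;>
      rcases abs_cases (p.im - q.im) with ⟨h', _⟩ | ⟨h', _⟩ <;> rw [h, h'] <;> linarith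
    have hb : |p.im - q.im| ≤ 0.92 := by
      rw [abs_le] at *
      constructor <;> linarith [hp.1, hp.2, hq.1, hq.2]
    have h5 : (p.re - q.re) * cos θ ≤ |p.re - q.re| * |cos θ| := by
      rw [← abs_mul]; exact le_abs_self _
    have h6 : (p.im - q.im) * sin θ ≤ |p.im - q.im| * |sin θ| := by
      rw [← abs_mul]; exact le_abs_self _
    have hc : |cos θ| ≤ 5723 / 6445 := by
      have := sin_sq_add_cos_sq θ
      rw [← sq_abs (sin θ), ← sq_abs (cos θ)] at this
      apply abs_le_of_sq_le_sq' _ (by norm_num) |>.2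
      nlinarith
    refine (add_le_add h5 h6).trans ?_
    generalize |p.re - q.re| = a at *
    generalize |p.im - q.im| = b at *
    have hC0 := abs_nonneg (cos θ)
    generalize |cos θ| = C at *
    generalize |sin θ| = S at *
    have h7 := mul_le_mul_of_nonneg_left h0 hC0
    have h8 : 0 ≤ (0.92 - b) * (S * (5723 / 6445) - C * (2964 / 6445)) :=
      mul_nonneg (by linarith) (by nlinarith)
    linarith

lemma arctan_upper (t : ℝ) (ht : 0 ≤ t) :
    arctan t ≤ t - t ^ 3 / 3 + t ^ 5 / 5 - t ^ 7 / 7 + t ^ 9 / 9 := by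
  have hd : ∀ x : ℝ, HasDerivAt
      (fun t : ℝ => t - t ^ 3 / 3 + t ^ 5 / 5 - t ^ 7 / 7 + t ^ 9 / 9 - arctan t)
      (x ^ 10 / (1 + x ^ 2)) x := by
    intro x
    have h := (((((hasDerivAt_id x).sub (((hasDerivAt_id x).pow 3).div_const 3)).add
      (((hasDerivAt_id x).pow 5).div_const 5)).sub (((hasDerivAt_id x).pow 7).div_const 7)).add
      (((hasDerivAt_id x).pow 9).div_const 9)).sub (hasDerivAt_arctan x)
    refine HasDerivAt.congr_deriv h ?_
    have : (1 + x ^ 2) ≠ 0 := by positivity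
    simp only [id]
    push_cast
    field_simp
    ring
  have hm := monotone_of_deriv_nonneg (fun x => (hd x).differentiableAt) (fun x => by
    rw [(hd x).deriv]; positivity)
  have := hm ht
  simp at this
  linarith

lemma wid_integral : ∫ θ in (0 : ℝ)..π, wid θ ≤ 3.4637 := by
  have hii : ∀ a b, IntervalIntegrable wid volume a b :=
    fun a b => wid_continuous.intervalIntegrable a b
  have hsym : ∀ θ, wid (π - θ) = wid θ := by
    intro θ; simp [wid, sin_pi_sub, cos_pi_sub]
  have h1 : ∫ θ in (π / 2)..π, wid θ = ∫ θ in (0 : ℝ)..(π / 2), wid θ := by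
    have := intervalIntegral.integral_comp_sub_left (a := 0) (b := π / 2) wid π
    simp only [hsym] at this
    rw [this]
    congr 1 <;> ring
  set φ := 2 * arctan (19 / 78) with hφ
  have hφ0 : 0 < φ := by
    have : 0 < arctan (19 / 78) := by rw [← arctan_zero]; exact arctan_strictMono (by norm_num)
    linarith
  have hφ1 : φ < π / 2 := by
    have : arctan (19 / 78) < arctan 1 := arctan_strictMono (by norm_num)
    rw [arctan_one] at this
    linarith
  have hsin : sin φ = 2964 / 6445 := by
    rw [hφ, sin_two_mul, sin_arctan, cos_arctan]
    have h3 : √(1 + (19 / 78 : ℝ) ^ 2) * √(1 + (19 / 78 : ℝ) ^ 2) = 1 + (19 / 78) ^ 2 :=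
      mul_self_sqrt (by norm_num)
    have h4 : √(1 + (19 / 78 : ℝ) ^ 2) ≠ 0 := by positivity
    rw [mul_assoc, div_mul_div_comm, h3] <;> norm_num
  have hcos : cos φ = 5723 / 6445 := by
    rw [hφ, cos_two_mul, cos_sq_arctan]; norm_num
  have h2 : ∫ θ in (0 : ℝ)..φ, wid θ = 2 * φ - 2964 / 6445 := by
    have : ∫ θ in (0 : ℝ)..φ, wid θ = ∫ θ in (0 : ℝ)..φ, (2 - cos θ) := by
      apply intervalIntegral.integral_congr
      intro θ hθ
      rw [Set.uIcc_of_le hφ0.le] at hθ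
      have hs0 : 0 ≤ sin θ := sin_nonneg_of_nonneg_of_le_pi hθ.1 (by linarith [hθ.2])
      have hc0 : 0 ≤ cos θ := cos_nonneg_of_neg_pi_div_two_le_of_le (by linarith [hθ.1])
        (by linarith [hθ.2])
      have hle : sin θ ≤ 2964 / 6445 := by
        rw [← hsin]
        exact sin_le_sin_of_le_of_le_pi_div_two (by linarith [hθ.1]) hφ1.le hθ.2
      simp only [wid]
      rw [abs_of_nonneg hs0, abs_of_nonneg hc0, if_pos hle]
    rw [this, intervalIntegral.integral_sub (by simp)
      (continuous_cos.intervalIntegrable _ _), integral_cos, hsin]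
    simp; ring
  have h3 : ∫ θ in φ..(π / 2), wid θ =
      (2 - 5723 / 6445 - 0.92 * (2964 / 6445)) / (5723 / 6445) * (1 - 2964 / 6445) +
        0.92 * (5723 / 6445) := by
    have : ∫ θ in φ..(π / 2), wid θ = ∫ θ in φ..(π / 2),
        ((2 - 5723 / 6445 - 0.92 * (2964 / 6445)) / (5723 / 6445) * cos θ + 0.92 * sin θ) := by
      apply intervalIntegral.integral_congr_ae
      filter_upwards with θ hθ
      rw [Set.uIoc_of_le hφ1.le] at hθ
      have hs0 : 0 ≤ sin θ := sin_nonneg_of_nonneg_of_le_pi (by linarith [hθ.1])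
        (by linarith [hθ.2])
      have hc0 : 0 ≤ cos θ := cos_nonneg_of_neg_pi_div_two_le_of_le (by linarith [hθ.1])
        (by linarith [hθ.2])
      have hle : 2964 / 6445 < sin θ := by
        rw [← hsin]
        exact sin_lt_sin_of_lt_of_le_pi_div_two (by linarith) hθ.2 hθ.1
      simp only [wid]
      rw [abs_of_nonneg hs0, abs_of_nonneg hc0, if_neg (not_le.2 hle)]
    rw [this, intervalIntegral.integral_add
      ((by fun_prop : Continuous _).intervalIntegrable _ _)
      ((by fun_prop : Continuous _).intervalIntegrable _ _),
      intervalIntegral.integral_const_mul, intervalIntegral.integral_const_mul,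
      integral_cos, integral_sin, hsin, hcos]
    simp
  have h4 := arctan_upper (19 / 78) (by norm_num)
  rw [← intervalIntegral.integral_add_adjacent_intervals (hii 0 (π / 2)) (hii (π / 2) π), h1,
    ← intervalIntegral.integral_add_adjacent_intervals (hii 0 φ) (hii φ (π / 2)), h2, h3, hφ]
  norm_num at h4 ⊢
  linarith

lemma moved_norm (d1 d2 δ : ℝ) (hd1 : 0 ≤ d1) (hd2' : d2 ≤ 2 * π)
    (hδ : δ = d1 / √2 + sin (d2 / 4) / √3) (x y r ψ ψ' e1 e2 θ : ℝ) (hr : 0 ≤ r)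
    (hr3 : r ≤ √3 / 6) (hψ : ψ' = ψ + θ)
    (h1 : |e1| ≤ d1 / 2) (h2 : |e2| ≤ d1 / 2) (h5 : |θ| ≤ d2 / 2) :
    ‖(⟨x + e1 + r * cos ψ', y + e2 + r * sin ψ'⟩ : ℂ) - ⟨x + r * cos ψ, y + r * sin ψ⟩‖ ≤ δ := by
  subst hψ
  have hsplit : (⟨x + e1 + r * cos (ψ + θ), y + e2 + r * sin (ψ + θ)⟩ : ℂ) -
      ⟨x + r * cos ψ, y + r * sin ψ⟩ =
      ⟨e1, e2⟩ + (r : ℂ) * ⟨cos (ψ + θ) - cos ψ, sin (ψ + θ) - sin ψ⟩ := by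
    apply Complex.ext <;> simp <;> ring
  have hA : ‖(⟨e1, e2⟩ : ℂ)‖ ≤ d1 / √2 := by
    apply abs_le_of_sq_le_sq' _ (by positivity) |>.2
    rw [Complex.sq_norm, Complex.normSq_apply, div_pow, sq_sqrt (by norm_num)]
    have := sq_le_sq' (abs_le.1 h1).1 (abs_le.1 h1).2
    have := sq_le_sq' (abs_le.1 h2).1 (abs_le.1 h2).2
    simp only
    linarith
  have hθ : |sin (θ / 2)| ≤ sin (d2 / 4) := by
    have h6 := abs_le.1 h5
    rw [abs_le]
    constructor
    · rw [← sin_neg]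
      apply sin_le_sin_of_le_of_le_pi_div_two <;> linarith [h6.1, h6.2]
    · apply sin_le_sin_of_le_of_le_pi_div_two <;> linarith [h6.1, h6.2]
  have hs0 : 0 ≤ sin (d2 / 4) := (abs_nonneg _).trans hθ
  have hB : ‖(⟨cos (ψ + θ) - cos ψ, sin (ψ + θ) - sin ψ⟩ : ℂ)‖ ≤ 2 * sin (d2 / 4) := by
    apply abs_le_of_sq_le_sq' _ (by positivity) |>.2
    rw [Complex.sq_norm, Complex.normSq_apply]
    simp only
    have e : (cos (ψ + θ) - cos ψ) * (cos (ψ + θ) - cos ψ) +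
        (sin (ψ + θ) - sin ψ) * (sin (ψ + θ) - sin ψ) = 4 * sin (θ / 2) ^ 2 := by
      have hc : cos θ = 1 - 2 * sin (θ / 2) ^ 2 := by
        conv_lhs => rw [show θ = 2 * (θ / 2) by ring, cos_two_mul]
        linarith [sin_sq_add_cos_sq (θ / 2)]
      have h7 := sin_sq_add_cos_sq (ψ + θ)
      have h8 := sin_sq_add_cos_sq ψ
      have h9 : cos θ = cos (ψ + θ) * cos ψ + sin (ψ + θ) * sin ψ := by
        rw [← cos_sub]; congr 1; ring
      linear_combination h7 + h8 + 2 * h9 - 2 * hc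
    rw [e]
    have := sq_le_sq' (abs_le.1 hθ).1 (abs_le.1 hθ).2
    linarith
  have h3 : √3 / 6 * (2 * sin (d2 / 4)) = sin (d2 / 4) / √3 := by
    have := mul_self_sqrt (by norm_num : (0 : ℝ) ≤ 3)
    field_simp
    linear_combination 2 * sin (d2 / 4) * this
  rw [hsplit, hδ]
  refine (norm_add_le _ _).trans (add_le_add hA ?_)
  rw [norm_mul, Complex.norm_real, norm_of_nonneg hr, ← h3]
  gcongr

lemma final_step (X X' : Set (EuclideanSpace ℝ (Fin 2))) (hfin : X.Finite) (δ : ℝ) (hδ : 0 ≤ δ)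
    (hX : ∀ p ∈ X, ‖(⟨p 0, p 1⟩ : ℂ)‖ ≤ 1 ∧ ‖(⟨p 0, p 1⟩ : ℂ) - 1‖ ≤ 1 ∧ |p 1| ≤ 0.46)
    (hXX' : ∀ p' ∈ X', ∃ p ∈ X, ‖(⟨p' 0, p' 1⟩ : ℂ) - ⟨p 0, p 1⟩‖ ≤ δ) :
    (volume (convexHull ℝ X')).toReal ≤
      (volume (convexHull ℝ X)).toReal + 3.4637 * δ + π * δ ^ 2 := by
  set Φ := Complex.orthonormalBasisOneI.repr.symm with hΦ
  have hΦa : ∀ p, Φ p = ⟨p 0, p 1⟩ := by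
    intro p; rw [hΦ, Complex.orthonormalBasisOneI_repr_symm_apply]
    apply Complex.ext <;> simp
  have hvol : ∀ S : Set (EuclideanSpace ℝ (Fin 2)),
      volume (convexHull ℝ S) = volume (convexHull ℝ (Φ '' S)) := by
    intro S
    have h1 : convexHull ℝ (Φ '' S) = Φ '' convexHull ℝ S :=
      ((Φ.toLinearEquiv : EuclideanSpace ℝ (Fin 2) →ₗ[ℝ] ℂ).image_convexHull S).symm
    have h2 : Φ '' convexHull ℝ S = Φ.symm ⁻¹' convexHull ℝ S :=
      Φ.toEquiv.image_eq_preimage_symm _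
    rw [h1, h2]
    exact (Φ.symm.measurePreserving.measure_preimage_equiv
      (f := Φ.symm.toMeasurableEquiv) _).symm
  rw [hvol X, hvol X']
  set K := convexHull ℝ (Φ '' X) with hKd
  have hK : IsCompact K := (hfin.image Φ).isCompact_convexHull ℝ
  have hc : Convex ℝ K := convex_convexHull ℝ _
  have hreg : K ⊆ {z : ℂ | ‖z‖ ≤ 1 ∧ ‖z - 1‖ ≤ 1 ∧ |z.im| ≤ 0.46} := by
    apply convexHull_min
    · rintro _ ⟨p, hp, rfl⟩
      rw [hΦa]; exact hX p hp
    · have e : {z : ℂ | ‖z‖ ≤ 1 ∧ ‖z - 1‖ ≤ 1 ∧ |z.im| ≤ 0.46} =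
          Metric.closedBall 0 1 ∩ (Metric.closedBall 1 1 ∩ (Complex.imLm ⁻¹' Set.Icc (-0.46) 0.46)) := by
        ext z; simp [dist_eq_norm, abs_le]
      rw [e]
      exact (convex_closedBall _ _).inter ((convex_closedBall _ _).inter
        ((convex_Icc _ _).linear_preimage _))
  have hsub : convexHull ℝ (Φ '' X') ⊆ K + Metric.closedBall 0 δ := by
    apply convexHull_min
    · rintro _ ⟨p', hp', rfl⟩
      obtain ⟨p, hp, hpp⟩ := hXX' p' hp'
      refine ⟨Φ p, subset_convexHull ℝ _ ⟨p, hp, rfl⟩, Φ p' - Φ p, ?_, by simp⟩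
      rw [hΦa, hΦa]; simpa using hpp
    · exact hc.add (convex_closedBall _ _)
  have hst := steiner K hK hc wid wid_continuous wid_nonneg (fun θ p hp q hq =>
    wid_bound p q (hreg hp).1 (hreg hp).2.1 (hreg hp).2.2 (hreg hq).1 (hreg hq).2.1
      (hreg hq).2.2 θ) δ hδ
  have h1 : (volume (convexHull ℝ (Φ '' X'))).toReal ≤ volume.real (K + Metric.closedBall 0 δ) :=
    ENNReal.toReal_mono (hK.add (isCompact_closedBall _ _)).measure_lt_top.ne (measure_mono hsub)
  have h2 := mul_le_mul_of_nonneg_left wid_integral hδ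
  have h3 : volume.real K = (volume K).toReal := rfl
  linarith

theorem lipschitz_perturbation_bound (d1 d2 δ : ℝ) (hd1 : 0 ≤ d1)
    (hd2 : 0 ≤ d2) (hd2' : d2 ≤ 2 * Real.pi)
    (hδ : δ = d1 / Real.sqrt 2 + Real.sin (d2 / 4) / Real.sqrt 3)
    (x1 y1 a x2 y2 b : ℝ)
    (hconf : ∀ p ∈ config x1 y1 a x2 y2 b,
      dist p (pt 0 0) ≤ 1 ∧ dist p (pt 1 0) ≤ 1 ∧ p 1 ∈ Set.Icc (-0.46 : ℝ) 0.46)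
    (δ1 δ2 δ3 δ4 θ1 θ2 : ℝ)
    (h1 : |δ1| ≤ d1 / 2) (h2 : |δ2| ≤ d1 / 2) (h3 : |δ3| ≤ d1 / 2)
    (h4 : |δ4| ≤ d1 / 2) (h5 : |θ1| ≤ d2 / 2) (h6 : |θ2| ≤ d2 / 2) :
    area (x1 + δ1) (y1 + δ2) (a + θ1) (x2 + δ3) (y2 + δ4) (b + θ2) ≤
      area x1 y1 a x2 y2 b + 3.4637 * δ + Real.pi * δ ^ 2 := by
  have hδ0 : 0 ≤ δ := by
    have : 0 ≤ sin (d2 / 4) := sin_nonneg_of_nonneg_of_le_pi (by linarith) (by linarith)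
    rw [hδ]; positivity
  have p0 : ∀ x y, (pt x y) 0 = x := fun x y => rfl
  have p1 : ∀ x y, (pt x y) 1 = y := fun x y => rfl
  have hdist : ∀ (p : EuclideanSpace ℝ (Fin 2)) (x y : ℝ),
      dist p (pt x y) = ‖(⟨p 0, p 1⟩ : ℂ) - ⟨x, y⟩‖ := by
    intro p x y
    rw [EuclideanSpace.dist_eq, Complex.norm_eq_sqrt_sq_add_sq]
    simp [Fin.sum_univ_two, p0, p1, Real.dist_eq, sq_abs]
  unfold area
  apply final_step _ _ _ δ hδ0
  · intro p hp
    obtain ⟨ha, hb, hc⟩ := hconf p hp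
    rw [hdist] at ha hb
    refine ⟨?_, ?_, abs_le.2 ⟨by linarith [hc.1], hc.2⟩⟩
    · simpa [show (⟨0, 0⟩ : ℂ) = 0 from rfl] using ha
    · simpa [show (⟨1, 0⟩ : ℂ) = 1 from rfl] using hb
  · have hr2 : √2 / 6 ≤ √3 / 6 := by gcongr; norm_num
    rintro p' ((hp' | ⟨k, rfl⟩) | ⟨k, rfl⟩)
    · exact ⟨p', Or.inl (Or.inl hp'), by simpa using hδ0⟩
    · refine ⟨sqVertex x1 y1 a k, Or.inl (Or.inr ⟨k, rfl⟩), ?_⟩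
      exact moved_norm d1 d2 δ hd1 hd2' hδ x1 y1 (√2 / 6) _ _ δ1 δ2 θ1 (by positivity) hr2
        (by ring) h1 h2 h5
    · refine ⟨triVertex x2 y2 b k, Or.inr ⟨k, rfl⟩, ?_⟩
      exact moved_norm d1 d2 δ hd1 hd2' hδ x2 y2 (√3 / 6) _ _ δ3 δ4 θ2 (by positivity) le_rfl
        (by ring) h3 h4 h6
  · exact (((Set.finite_singleton _).insert _).union (Set.finite_range _)).union
      (Set.finite_range _)
end

section
/- For all real α, β with π/4 ≤ α ≤ 78π/180 and 83π/180 ≤ β ≤ 97π/180, the maximum of the four quantities (1/6)·((1/2)·cos(α − β + π/12) + cos(α − π/4)), (√2/6)·sin α, (1/4)·sin(β − π/6), and (1/4)·sin(β + π/6) is at least 0.227498. -/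
theorem alg_bound (S X T Y r : ℝ) (hS : 0 ≤ S) (hSX : S ≤ X) (h1 : S ^ 2 + X ^ 2 = 1)
    (hY : 0 ≤ Y) (hT : T ≤ 1 / 2) (hT' : -(1 / 2) ≤ T) (h2 : T ^ 2 + Y ^ 2 = 1)
    (hr0 : 0 ≤ r) (hr : r ^ 2 = 3)
    (A : S + X < 1.364988) (B : r * Y + T < 1.819984) (C : r * Y - T < 1.819984) :
    1.364988 ≤ X + r / 4 * (X * Y + S * T) + 1 / 4 * (S * Y - X * T) := by
  have hrl : 1.7320508 ≤ r := by
    by_contra! h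
    nlinarith
  have hru : r ≤ 1.7320509 := by
    by_contra! h
    nlinarith
  have key : ∀ t : ℝ, t ≤ 1 / 2 → t ^ 2 + Y ^ 2 = 1 → r * Y + t < 1.819984 →
      t ≤ 0.0959196 := by
    intro t ht ht2 hB
    by_contra! h
    have h0 : 0 ≤ r * Y := mul_nonneg hr0 hY
    have h3 : (r * Y) ^ 2 = 3 * (1 - t ^ 2) := by rw [mul_pow, hr]; linarith
    have h4 : (r * Y) ^ 2 < (1.819984 - t) ^ 2 := by
      apply pow_lt_pow_left₀ (by linarith) h0 (by norm_num)
    nlinarith [mul_pos (sub_pos.2 h) (show (0:ℝ) < 0.81 - t by linarith)]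
  have hTu := key T hT h2 B
  have hTl := key (-T) (by linarith) (by linarith [neg_sq T]) (by linarith)
  have hYl : 0.99538908 ≤ Y := by
    by_contra! h
    have : T ^ 2 ≤ 0.0959196 ^ 2 := sq_le_sq' (by linarith) hTu
    nlinarith
  have hSu : S ≤ 0.4975564 := by
    by_contra! h
    have h4 : X ^ 2 < (1.364988 - S) ^ 2 := by
      apply pow_lt_pow_left₀ (by linarith) (by linarith) (by norm_num)
    nlinarith [mul_pos (sub_pos.2 h) (show (0:ℝ) < 0.86 - S by linarith)]
  have hXl : 0.8674316 ≤ X := by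
    by_contra! h
    nlinarith
  have hch : 1 - 0.13256840 / 0.4975564 * S ≤ X := by
    by_contra! h
    have h5 : X ^ 2 < (1 - 0.13256840 / 0.4975564 * S) ^ 2 := by
      apply pow_lt_pow_left₀ h (by linarith) (by norm_num)
    nlinarith [mul_nonneg hS (sub_nonneg.2 hSu)]
  have e1 : (r * S - X) * 0.0959196 ≤ (r * S - X) * T := by
    have : r * S ≤ 1.7320509 * 0.4975564 := mul_le_mul hru hSu hS (by norm_num)
    have h6 : r * S - X ≤ 0 := by linarith
    exact mul_le_mul_of_nonpos_left hTu h6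
  have e2 : (r * X + S) * 0.99538908 ≤ (r * X + S) * Y :=
    mul_le_mul_of_nonneg_left hYl (by nlinarith)
  have e3 : 1.7320508 * S ≤ r * S := mul_le_mul_of_nonneg_right hrl hS
  have e4 : 1.7320508 * X ≤ r * X := mul_le_mul_of_nonneg_right hrl (by linarith)
  nlinarith

theorem p_lower_bound (a b : ℝ) (h1 : Real.pi / 4 ≤ a) (h2 : a ≤ 78 * Real.pi / 180)
    (h3 : 83 * Real.pi / 180 ≤ b) (h4 : b ≤ 97 * Real.pi / 180) :
    max (max (1 / 6 * (1 / 2 * Real.cos (a - b + Real.pi / 12) + Real.cos (a - Real.pi / 4)))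
        (Real.sqrt 2 / 6 * Real.sin a))
      (max (1 / 4 * Real.sin (b - Real.pi / 6)) (1 / 4 * Real.sin (b + Real.pi / 6))) ≥
      0.227498 := by
  have hpi := Real.pi_pos
  obtain ⟨x, rfl⟩ : ∃ x, a = x + Real.pi / 4 := ⟨a - Real.pi / 4, by ring⟩
  obtain ⟨y, rfl⟩ : ∃ y, b = y + Real.pi / 2 := ⟨b - Real.pi / 2, by ring⟩
  have q1 : Real.cos (x + Real.pi / 4 - (y + Real.pi / 2) + Real.pi / 12) =
      √3 / 2 * (Real.cos x * Real.cos y + Real.sin x * Real.sin y)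
        + 1 / 2 * (Real.sin x * Real.cos y - Real.cos x * Real.sin y) := by
    rw [show x + Real.pi / 4 - (y + Real.pi / 2) + Real.pi / 12 = (x - y) - Real.pi / 6 by ring,
      Real.cos_sub, Real.cos_sub, Real.sin_sub, Real.cos_pi_div_six, Real.sin_pi_div_six]
    ring
  have q2 : √2 / 6 * Real.sin (x + Real.pi / 4) = (Real.sin x + Real.cos x) / 6 := by
    rw [Real.sin_add, Real.cos_pi_div_four, Real.sin_pi_div_four]
    have : √2 * √2 = 2 := Real.mul_self_sqrt (by norm_num)
    linear_combination (Real.sin x + Real.cos x) / 12 * this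
  have q3 : Real.sin (y + Real.pi / 2 - Real.pi / 6) = (√3 * Real.cos y + Real.sin y) / 2 := by
    rw [Real.sin_sub, Real.sin_add_pi_div_two, Real.cos_add_pi_div_two, Real.cos_pi_div_six,
      Real.sin_pi_div_six]
    ring
  have q4 : Real.sin (y + Real.pi / 2 + Real.pi / 6) = (√3 * Real.cos y - Real.sin y) / 2 := by
    rw [Real.sin_add, Real.sin_add_pi_div_two, Real.cos_add_pi_div_two, Real.cos_pi_div_six,
      Real.sin_pi_div_six]
    ring
  by_contra! hcon
  rw [max_lt_iff, max_lt_iff, max_lt_iff, q1, q2, q3, q4, add_sub_cancel_right] at hcon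
  obtain ⟨⟨c1, c2⟩, c3, c4⟩ := hcon
  have s1 : 0 ≤ Real.sin x := Real.sin_nonneg_of_nonneg_of_le_pi (by linarith) (by linarith)
  have s2 : Real.sin x ≤ Real.cos x := by
    rw [← Real.sin_pi_div_two_sub]
    exact Real.sin_le_sin_of_le_of_le_pi_div_two (by linarith) (by linarith) (by linarith)
  have s3 : Real.sin y ≤ 1 / 2 := by
    rw [← Real.sin_pi_div_six]
    exact Real.sin_le_sin_of_le_of_le_pi_div_two (by linarith) (by linarith) (by linarith)
  have s4 : -(1 / 2) ≤ Real.sin y := by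
    rw [← Real.sin_pi_div_six, ← Real.sin_neg]
    exact Real.sin_le_sin_of_le_of_le_pi_div_two (by linarith) (by linarith) (by linarith)
  have s5 : 0 ≤ Real.cos y := Real.cos_nonneg_of_neg_pi_div_two_le_of_le (by linarith) (by linarith)
  have := alg_bound (Real.sin x) (Real.cos x) (Real.sin y) (Real.cos y) √3 s1 s2
    (Real.sin_sq_add_cos_sq x) s5 s3 s4 (Real.sin_sq_add_cos_sq y) (Real.sqrt_nonneg 3)
    (Real.sq_sqrt (by norm_num)) (by linarith) (by linarith) (by linarith)
  linarith
end
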